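/- arXiv:2305.07456 — 3 statements merged into one kernel-verified Lean document; each statement's English description precedes it below -/
import Mathlib

section
/- Every length space is quasi-isometric to a connected graph (regarded as a metric space via its graph distance). -/
/-!
The graph has the points of `X` as vertices, with distinct points adjacent when they are at
distance at most `1`; the identity map is then a `(1,1)`-quasi-isometry. The triangle inequality
along a walk bounds `dist x y` by the graph distance (`dist_le_length`). Conversely, if
`dist x y < n + 1`, then `x` and `y` are joined by a walk of length at most `n + 1`
(`exists_walk_of_dist_lt`): the intermediate value theorem on an almost shortest path gives a
point `z` with `dist x z = 1` and `dist z y < n`, and one inducts on `n`. Hence the graph distance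
is at most `⌊dist x y⌋ + 1`.
-/

/-- An `(M,A)`-quasi-isometry between two types equipped with distance functions. -/
def IsQuasiIsometry {X Y : Type*} (dX : X → X → ℝ) (dY : Y → Y → ℝ)
    (M A : ℝ) (f : X → Y) : Prop :=
  1 ≤ M ∧ 0 ≤ A ∧
  (∀ x y, M⁻¹ * dX x y - A ≤ dY (f x) (f y)) ∧
  (∀ x y, dY (f x) (f y) ≤ M * dX x y + A) ∧
  (∀ z : Y, ∃ x : X, dY z (f x) ≤ A)

/-- Two distance spaces are quasi-isometric if some `(M,A)`-quasi-isometry exists. -/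
def QuasiIsometric {X Y : Type*} (dX : X → X → ℝ) (dY : Y → Y → ℝ) : Prop :=
  ∃ M A f, IsQuasiIsometry dX dY M A f

/-- The graph distance of a simple graph, as a real-valued distance. -/
noncomputable def graphDist {V : Type*} (G : SimpleGraph V) (u v : V) : ℝ := (G.dist u v : ℝ)

/-- A metric space is a length space if any two points are joined by paths of length
arbitrarily close to their distance. -/
def IsLengthSpace (X : Type*) [MetricSpace X] : Prop :=
  ∀ x y : X, ∀ ε : ℝ, 0 < ε → ∃ p : Path x y,
    eVariationOn (fun t => p t) Set.univ ≤ ENNReal.ofReal (dist x y + ε)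

/-- The graph on the points of `X` joining distinct points at distance at most `1`. -/
def unitGraph (X : Type*) [MetricSpace X] : SimpleGraph X where
  Adj x y := x ≠ y ∧ dist x y ≤ 1
  symm := ⟨fun x y h => ⟨h.1.symm, by rw [dist_comm]; exact h.2⟩⟩
  loopless := ⟨fun _ h => h.1 rfl⟩

theorem dist_le_length {X : Type*} [MetricSpace X] {x y : X} (w : (unitGraph X).Walk x y) :
    dist x y ≤ w.length := by
  induction w with
  | nil => simp
  | cons h w ih =>
    have := dist_triangle _ _ _ |>.trans (add_le_add h.2 ih)
    simp only [SimpleGraph.Walk.length_cons]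
    push_cast
    linarith

/-- In a length space, one can move distance exactly `r` from `x` towards `y`, up to an
arbitrarily small error. -/
theorem exists_approx_between {X : Type*} [MetricSpace X] (hX : IsLengthSpace X) (x y : X)
    {r ε : ℝ} (hr : 0 ≤ r) (hrd : r ≤ dist x y) (hε : 0 < ε) :
    ∃ z, dist x z = r ∧ dist x z + dist z y ≤ dist x y + ε := by
  obtain ⟨p, hp⟩ := hX x y ε hε
  have hc : Continuous fun t => dist x (p t) := continuous_const.dist p.continuous
  obtain ⟨t, ht⟩ : r ∈ Set.range fun t => dist x (p t) :=
    mem_range_of_exists_le_of_exists_ge hc ⟨0, by simpa using hr⟩ ⟨1, by simpa using hrd⟩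
  refine ⟨p t, ht, ?_⟩
  -- The two pieces of the path before and after `t` have total length at most that of `p`.
  have h1 : edist x (p t) ≤ eVariationOn (fun t => p t) (Set.Iic t) := by
    simpa using eVariationOn.edist_le (fun t => p t) (s := Set.Iic t) (x := 0) (y := t)
      (Set.mem_Iic.2 t.2.1) (Set.mem_Iic.2 le_rfl)
  have h2 : edist (p t) y ≤ eVariationOn (fun t => p t) (Set.Ici t) := by
    simpa using eVariationOn.edist_le (fun t => p t) (s := Set.Ici t) (x := t) (y := 1)
      (Set.mem_Ici.2 le_rfl) (Set.mem_Ici.2 t.2.2)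
  have h3 : eVariationOn (fun t => p t) (Set.Iic t) + eVariationOn (fun t => p t) (Set.Ici t) ≤
      eVariationOn (fun t => p t) (Set.Iic t ∪ Set.Ici t) :=
    eVariationOn.add_le_union _ fun a ha b hb => le_trans (Set.mem_Iic.1 ha) (Set.mem_Ici.1 hb)
  have h4 := (add_le_add h1 h2).trans (h3.trans
    ((eVariationOn.mono _ (Set.subset_univ _)).trans hp))
  rw [edist_dist, edist_dist, ← ENNReal.ofReal_add dist_nonneg dist_nonneg] at h4
  exact (ENNReal.ofReal_le_ofReal_iff (by positivity)).1 h4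

theorem exists_walk_of_dist_lt {X : Type*} [MetricSpace X] (hX : IsLengthSpace X) (n : ℕ) :
    ∀ x y : X, dist x y < n + 1 → ∃ w : (unitGraph X).Walk x y, w.length ≤ n + 1 := by
  have step : ∀ (n : ℕ) (x y : X), dist x y ≤ 1 →
      ∃ w : (unitGraph X).Walk x y, w.length ≤ n + 1 := by
    intro n x y h
    by_cases hxy : x = y
    · subst hxy
      exact ⟨.nil, by simp⟩
    · exact ⟨.cons (show (unitGraph X).Adj x y from ⟨hxy, h⟩) .nil, by simp⟩
  induction n with
  | zero => exact fun x y h => step 0 x y (by simpa using h.le)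
  | succ n ih =>
    intro x y h
    push_cast at h
    rcases le_total (dist x y) 1 with h1 | h1
    · exact step _ x y h1
    -- The error is chosen so that the remaining distance stays strictly below `n + 1`.
    · obtain ⟨z, hz, hzy⟩ := exists_approx_between hX x y zero_le_one h1
        (ε := (n + 1 + 1 - dist x y) / 2) (by linarith)
      obtain ⟨w, hw⟩ := ih z y (by linarith)
      have hxz : x ≠ z := by
        rintro rfl
        simp at hz
      exact ⟨.cons (show (unitGraph X).Adj x z from ⟨hxz, hz.le⟩) w, by simpa using hw⟩

/-- Every length space is quasi-isometric to a connected graph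
(regarded as a metric space via its graph distance). -/
theorem length_space_quasiIsometric_to_graph
    {X : Type} [MetricSpace X] [Nonempty X] (hX : IsLengthSpace X) :
    ∃ (V : Type) (G : SimpleGraph V), G.Connected ∧
      QuasiIsometric (fun x y : X => dist x y) (graphDist G) := by
  have hw (x y : X) := exists_walk_of_dist_lt hX ⌊dist x y⌋₊ x y (Nat.lt_floor_add_one _)
  have hconn : (unitGraph X).Connected :=
    ⟨fun x y => (hw x y).elim fun w _ => ⟨w⟩⟩
  refine ⟨X, unitGraph X, hconn, 1, 1, id, le_rfl, zero_le_one, fun x y => ?_, fun x y => ?_,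
    fun z => ⟨z, by simp [graphDist]⟩⟩
  · obtain ⟨w, hlen⟩ := hconn.exists_walk_length_eq_dist x y
    have := dist_le_length w
    rw [hlen] at this
    simp only [graphDist, id]
    linarith
  · obtain ⟨w, hlen⟩ := hw x y
    have h1 : (((unitGraph X).dist x y : ℕ) : ℝ) ≤ (⌊dist x y⌋₊ + 1 : ℕ) :=
      Nat.cast_le.2 ((SimpleGraph.dist_le w).trans hlen)
    have h2 := Nat.floor_le (dist_nonneg (x := x) (y := y))
    push_cast at h1
    simp only [graphDist, id]
    linarith
end

section
/- Let 𝓗 be a set of 2-connected finite graphs, and let 𝓒 = Forb(𝓗) be the class of graphs having no element of 𝓗 as a minor. Then a graph X is quasi-isometric to an element of 𝓒 if and only if X admits a map of bounded multiplicative distortion (i.e., an (M,0)-quasi-isometry for some M ≥ 1) into an element of 𝓒. -/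
/-- `H` is a minor of `G`: there are pairwise disjoint branch sets in `G`, one for each
vertex of `H`, inducing connected subgraphs, such that branch sets of adjacent vertices
of `H` are joined by an edge of `G`. -/
def IsGraphMinor {W V : Type*} (H : SimpleGraph W) (G : SimpleGraph V) : Prop :=
  ∃ B : W → Set V,
    (∀ w, (G.induce (B w)).Connected) ∧
    (∀ v v', v ≠ v' → Disjoint (B v) (B v')) ∧
    (∀ u w, H.Adj u w → ∃ a ∈ B u, ∃ b ∈ B w, G.Adj a b)

/-- A graph is 2-connected if it has at least 3 vertices, is connected, and remains
connected after deleting any single vertex. -/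
def TwoConnected {W : Type*} (H : SimpleGraph W) : Prop :=
  3 ≤ Nat.card W ∧ H.Connected ∧ ∀ v : W, (H.induce {u : W | u ≠ v}).Connected

/-- The graph obtained from `G` by attaching, for every `x : V`, a new pendant vertex `inr x` to the
vertex `f x` of `G`. -/
def pendantGraph {V V' : Type*} (G : SimpleGraph V') (f : V → V') : SimpleGraph (V' ⊕ V) where
  Adj
    | .inl a, .inl b => G.Adj a b
    | .inl a, .inr x => a = f x
    | .inr x, .inl a => a = f x
    | .inr _, .inr _ => False
  symm := ⟨by
    rintro (a | x) (b | y) h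
    · exact G.adj_symm h
    · exact h
    · exact h
    · exact h⟩
  loopless := ⟨by
    rintro (a | x) h
    · exact G.loopless.irrefl a h
    · exact h⟩

/-- The retraction of the pendant graph onto `G`, sending each pendant vertex to its foot. -/
def pendantRetract {V V' : Type*} (f : V → V') : V' ⊕ V → V' := Sum.elim id f

lemma pendantRetract_adj {V V' : Type*} {G : SimpleGraph V'} {f : V → V'} {s t : V' ⊕ V}
    (h : (pendantGraph G f).Adj s t) :
    pendantRetract f s = pendantRetract f t ∨
      G.Adj (pendantRetract f s) (pendantRetract f t) := by
  rcases s with a | x <;> rcases t with b | y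
  · exact Or.inr h
  · exact Or.inl h
  · exact Or.inl (Eq.symm h)
  · exact h.elim

lemma dist_pendantRetract_le {V V' : Type*} {G : SimpleGraph V'} (hG : G.Connected) {f : V → V'}
    {s t : V' ⊕ V} (p : (pendantGraph G f).Walk s t) :
    G.dist (pendantRetract f s) (pendantRetract f t) ≤ p.length := by
  induction p with
  | nil => simp
  | cons h q ih =>
    rename_i u v w
    have h1 : G.dist (pendantRetract f u) (pendantRetract f v) ≤ 1 := by
      rcases pendantRetract_adj h with h | h
      · simp [h]
      · exact (SimpleGraph.dist_eq_one_iff_adj.2 h).le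
    have h2 := hG.dist_triangle (u := pendantRetract f u) (v := pendantRetract f v)
      (w := pendantRetract f w)
    rw [SimpleGraph.Walk.length_cons]
    omega

/-- The copy of `G` inside the pendant graph. -/
def pendantInl {V V' : Type*} (G : SimpleGraph V') (f : V → V') : G →g pendantGraph G f where
  toFun := Sum.inl
  map_rel' h := h

lemma pendant_adj {V V' : Type*} (G : SimpleGraph V') (f : V → V') (x : V) :
    (pendantGraph G f).Adj (Sum.inl (f x)) (Sum.inr x) :=
  show f x = f x from rfl

lemma pendantGraph_connected {V V' : Type*} {G : SimpleGraph V'} (hG : G.Connected) (f : V → V') :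
    (pendantGraph G f).Connected := by
  have key : ∀ s : V' ⊕ V,
      (pendantGraph G f).Reachable s (Sum.inl (pendantRetract f s)) := by
    rintro (a | x)
    · exact SimpleGraph.Reachable.refl _
    · exact (pendant_adj G f x).symm.reachable
  have := hG.nonempty
  refine ⟨fun s t => (key s).trans (SimpleGraph.Reachable.trans ?_ (key t).symm)⟩
  exact (hG.preconnected _ _).map (pendantInl G f)

lemma dist_pendant_le {V V' : Type*} {G : SimpleGraph V'} (hG : G.Connected) (f : V → V')
    (x y : V) :
    (pendantGraph G f).dist (Sum.inr x) (Sum.inr y) ≤ G.dist (f x) (f y) + 2 := by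
  obtain ⟨p, hp⟩ := hG.exists_walk_length_eq_dist (f x) (f y)
  obtain ⟨q, hq⟩ : ∃ q : (pendantGraph G f).Walk (Sum.inl (f x)) (Sum.inl (f y)),
      q.length = p.length := ⟨p.map (pendantInl G f), p.length_map _⟩
  have := SimpleGraph.dist_le (SimpleGraph.Walk.cons (pendant_adj G f x).symm
    (q.append (SimpleGraph.Walk.cons (pendant_adj G f y) SimpleGraph.Walk.nil)))
  rw [SimpleGraph.Walk.length_cons, SimpleGraph.Walk.length_append, SimpleGraph.Walk.length_cons,
    SimpleGraph.Walk.length_nil] at this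
  omega

lemma SimpleGraph.Connected.exists_adj_of_ne {W : Type*} {H : SimpleGraph W} (hH : H.Connected)
    {v w : W} (h : v ≠ w) : ∃ u, H.Adj v u := by
  obtain ⟨p⟩ := hH.preconnected v w
  cases p with
  | nil => exact (h rfl).elim
  | cons h _ => exact ⟨_, h⟩

/-- Every vertex of a 2-connected graph has two distinct neighbours. -/
lemma TwoConnected.exists_two_adj {W : Type*} {H : SimpleGraph W} (h : TwoConnected H) (w : W) :
    ∃ u v, u ≠ v ∧ H.Adj w u ∧ H.Adj w v := by
  obtain ⟨hcard, hconn, hdel⟩ := h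
  have hfin : Finite W := Nat.finite_of_card_ne_zero (by omega)
  have third : ∀ a b : W, ∃ c, c ≠ a ∧ c ≠ b := by
    classical
    have := Fintype.ofFinite W
    intro a b
    by_contra! hc
    have h1 : (Finset.univ : Finset W) ⊆ {a, b} := by
      intro c _
      by_cases hca : c = a
      · simp [hca]
      · simp [hc c hca]
    have h2 := (Finset.card_le_card h1).trans Finset.card_le_two
    rw [Finset.card_univ, ← Nat.card_eq_fintype_card] at h2
    omega
  obtain ⟨c, hc, -⟩ := third w w
  obtain ⟨u, hu⟩ := hconn.exists_adj_of_ne hc.symm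
  -- The second neighbour is found in the connected graph `H - u`.
  obtain ⟨d, hdw, hdu⟩ := third w u
  obtain ⟨v, hv⟩ := (hdel u).exists_adj_of_ne (v := ⟨w, hu.ne⟩) (w := ⟨d, hdu⟩)
    (fun e => hdw (congrArg Subtype.val e).symm)
  exact ⟨u, v, fun e => v.2 e.symm, hu, hv⟩

/-- Attaching pendant vertices creates no new 2-connected minors. -/
lemma isGraphMinor_of_pendant {W V V' : Type*} {H : SimpleGraph W} (hH : TwoConnected H)
    {G : SimpleGraph V'} {f : V → V'} (h : IsGraphMinor H (pendantGraph G f)) :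
    IsGraphMinor H G := by
  obtain ⟨B, hconn, hdisj, hadj⟩ := h
  -- A branch set containing a pendant vertex contains its foot: otherwise it is that single vertex,
  -- and its two neighbouring branch sets would both contain the foot.
  have foot : ∀ w x, Sum.inr x ∈ B w → Sum.inl (f x) ∈ B w := by
    intro w x hx
    by_contra hfx
    have hsingle : ∀ a ∈ B w, a = Sum.inr x := by
      intro a ha
      by_contra hne
      obtain ⟨⟨u, hu⟩, hu'⟩ := (hconn w).exists_adj_of_ne
        (v := ⟨Sum.inr x, hx⟩) (w := ⟨a, ha⟩) (fun e => hne (congrArg Subtype.val e).symm)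
      have hu' : (pendantGraph G f).Adj (Sum.inr x) u := hu'
      rcases u with b | y
      · have : b = f x := hu'
        exact hfx (this ▸ hu)
      · exact hu'
    have hnb : ∀ u, H.Adj w u → Sum.inl (f x) ∈ B u := by
      intro u hu
      obtain ⟨a, ha, b, hb, hab⟩ := hadj w u hu
      rw [hsingle a ha] at hab
      rcases b with b | y
      · have : b = f x := hab
        exact this ▸ hb
      · exact hab.elim
    obtain ⟨u, v, huv, hu, hv⟩ := hH.exists_two_adj w
    exact Set.disjoint_left.1 (hdisj u v huv) (hnb u hu) (hnb v hv)
  have retr : ∀ w, ∀ s ∈ B w, pendantRetract f s ∈ Sum.inl ⁻¹' B w := by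
    rintro w (a | x) hs
    · exact hs
    · exact foot w x hs
  refine ⟨fun w => Sum.inl ⁻¹' B w, fun w => ?_, fun v v' hne => (hdisj v v' hne).preimage _, ?_⟩
  · obtain ⟨s⟩ := (hconn w).nonempty
    have : Nonempty (Sum.inl ⁻¹' B w : Set V') := ⟨⟨_, retr w s.1 s.2⟩⟩
    refine ⟨fun a b => ?_⟩
    have key : ∀ s t : B w, ((pendantGraph G f).induce (B w)).Walk s t →
        (G.induce (Sum.inl ⁻¹' B w)).Reachable ⟨_, retr w s.1 s.2⟩ ⟨_, retr w t.1 t.2⟩ := by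
      intro s t p
      induction p with
      | nil => exact SimpleGraph.Reachable.refl _
      | cons h q ih =>
        refine SimpleGraph.Reachable.trans ?_ ih
        rcases pendantRetract_adj (SimpleGraph.induce_adj.1 h) with h | h
        · simp only [h]
          exact SimpleGraph.Reachable.refl _
        · exact SimpleGraph.Adj.reachable (SimpleGraph.induce_adj.2 h)
    obtain ⟨p⟩ := (hconn w).preconnected ⟨Sum.inl a.1, a.2⟩ ⟨Sum.inl b.1, b.2⟩
    exact key _ _ p
  · intro u w huw
    obtain ⟨a, ha, b, hb, hab⟩ := hadj u w huw
    refine ⟨_, retr u a ha, _, retr w b hb, (pendantRetract_adj hab).resolve_left fun e => ?_⟩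
    exact Set.disjoint_left.1 (hdisj u w huw.ne) (retr u a ha) (e ▸ retr w b hb)

lemma isGraphMinor_of_induce {W V : Type*} {H : SimpleGraph W} {G : SimpleGraph V} {S : Set V}
    (h : IsGraphMinor H (G.induce S)) : IsGraphMinor H G := by
  obtain ⟨B, hconn, hdisj, hadj⟩ := h
  refine ⟨fun w => Subtype.val '' B w, fun w => ?_, fun v v' hne => ?_, ?_⟩
  · let φ : (G.induce S).induce (B w) →g G.induce (Subtype.val '' B w) :=
      ⟨fun a => ⟨a.1.1, a.1, a.2, rfl⟩, fun h => h⟩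
    refine (hconn w).map φ ?_
    rintro ⟨_, a, ha, rfl⟩
    exact ⟨⟨a, ha⟩, rfl⟩
  · exact (Set.disjoint_image_iff Subtype.val_injective).2 (hdisj v v' hne)
  · intro u w huw
    obtain ⟨a, ha, b, hb, hab⟩ := hadj u w huw
    exact ⟨a, ⟨a, ha, rfl⟩, b, ⟨b, hb, rfl⟩, hab⟩

/-- The set of vertices at distance at most `N` from the image of `f`. -/
def distNhd {V V' : Type*} (G : SimpleGraph V') (f : V → V') (N : ℕ) : Set V' :=
  {v | ∃ x, G.dist v (f x) ≤ N}

lemma mem_distNhd {V V' : Type*} (G : SimpleGraph V') (f : V → V') (N : ℕ) (x : V) :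
    f x ∈ distNhd G f N := ⟨x, by simp⟩

/-- A walk of length at most `N` ending at `f x` stays inside the `N`-neighbourhood of the image. -/
lemma exists_walk_distNhd {V V' : Type*} {G : SimpleGraph V'} {f : V → V'} {N : ℕ} (x : V)
    {v w : V'} (p : G.Walk v w) (hw : w = f x) (hv : v ∈ distNhd G f N) (hN : p.length ≤ N) :
    ∃ q : (G.induce (distNhd G f N)).Walk ⟨v, hv⟩ ⟨f x, mem_distNhd G f N x⟩,
      q.length = p.length := by
  induction p with
  | nil =>
    subst hw
    exact ⟨SimpleGraph.Walk.nil, rfl⟩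
  | cons h p ih =>
    subst hw
    rw [SimpleGraph.Walk.length_cons] at hN
    obtain ⟨q, hq⟩ := ih rfl ⟨x, (SimpleGraph.dist_le p).trans (by omega)⟩ (by omega)
    exact ⟨SimpleGraph.Walk.cons (SimpleGraph.induce_adj.2 h) q, by simp [hq]⟩

lemma exists_walk_distNhd_of_dist_le {V V' : Type*} {G : SimpleGraph V'} (hG : G.Connected)
    {f : V → V'} {N : ℕ} (x : V) (v : distNhd G f N) (h : G.dist v.1 (f x) ≤ N) :
    ∃ q : (G.induce (distNhd G f N)).Walk v ⟨f x, mem_distNhd G f N x⟩, q.length ≤ N := by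
  obtain ⟨p, hp⟩ := hG.exists_walk_length_eq_dist v.1 (f x)
  obtain ⟨q, hq⟩ := exists_walk_distNhd x p rfl v.2 (hp.trans_le h)
  exact ⟨q, by omega⟩

lemma exists_walk_distNhd_of_walk {V V' : Type*} {X : SimpleGraph V} {G : SimpleGraph V'}
    (hG : G.Connected) {f : V → V'} {N : ℕ} (hf : ∀ x y, X.Adj x y → G.dist (f x) (f y) ≤ N)
    {x y : V} (p : X.Walk x y) :
    ∃ q : (G.induce (distNhd G f N)).Walk ⟨f x, mem_distNhd G f N x⟩
      ⟨f y, mem_distNhd G f N y⟩, q.length ≤ N * p.length := by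
  induction p with
  | nil => exact ⟨SimpleGraph.Walk.nil, by simp⟩
  | cons h p ih =>
    rename_i u v w
    obtain ⟨q, hq⟩ := ih
    obtain ⟨r, hr⟩ := exists_walk_distNhd_of_dist_le hG v ⟨f u, mem_distNhd G f N u⟩ (hf _ _ h)
    refine ⟨r.append q, ?_⟩
    rw [SimpleGraph.Walk.length_append, SimpleGraph.Walk.length_cons, mul_add]
    omega

/-- Let `𝓗` be a set of 2-connected finite graphs and `𝓒 = Forb(𝓗)` the class of graphs
with no element of `𝓗` as a minor. A graph `X` is quasi-isometric to an element of `𝓒`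
iff `X` admits a map of bounded multiplicative distortion (an `(M,0)`-quasi-isometry
without the coboundedness requirement) into an element of `𝓒`. -/
theorem quasiIsometric_iff_multiplicativeDistortion_forbMinor
    {V : Type} (X : SimpleGraph V) (hX : X.Connected)
    {ι : Type} {W : ι → Type} (H : ∀ i, SimpleGraph (W i))
    (hfin : ∀ i, Finite (W i)) (h2conn : ∀ i, TwoConnected (H i)) :
    (∃ (V' : Type) (G' : SimpleGraph V'), G'.Connected ∧
        (∀ i, ¬ IsGraphMinor (H i) G') ∧
        QuasiIsometric (graphDist X) (graphDist G')) ↔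
    (∃ (V' : Type) (G' : SimpleGraph V'), G'.Connected ∧
        (∀ i, ¬ IsGraphMinor (H i) G') ∧
        ∃ M : ℝ, 1 ≤ M ∧ ∃ f : V → V', ∀ x y : V,
          M⁻¹ * graphDist X x y ≤ graphDist G' (f x) (f y) ∧
          graphDist G' (f x) (f y) ≤ M * graphDist X x y) := by
  constructor
  · rintro ⟨V', G, hG, hminor, M, A, f, hM, hA, hlow, hup, -⟩
    refine ⟨V' ⊕ V, pendantGraph G f, pendantGraph_connected hG f,
      fun i h => hminor i (isGraphMinor_of_pendant (h2conn i) h),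
      M * (1 + A) + 2, by nlinarith, Sum.inr, fun x y => ?_⟩
    have hK : 0 < M * (1 + A) + 2 := by positivity
    rcases eq_or_ne x y with rfl | hxy
    · simp [graphDist]
    have hX1 : (1 : ℝ) ≤ graphDist X x y := by
      exact Nat.one_le_cast.2 (hX.pos_dist_of_ne hxy)
    have hP1 : (1 : ℝ) ≤ graphDist (pendantGraph G f) (Sum.inr x) (Sum.inr y) := by
      exact Nat.one_le_cast.2
        ((pendantGraph_connected hG f).pos_dist_of_ne fun e => hxy (Sum.inr.inj e))
    have hP2 : graphDist G (f x) (f y) ≤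
        graphDist (pendantGraph G f) (Sum.inr x) (Sum.inr y) := by
      obtain ⟨p, hp⟩ := (pendantGraph_connected hG f).exists_walk_length_eq_dist
        (Sum.inr x) (Sum.inr y)
      have := dist_pendantRetract_le hG p
      rw [hp] at this
      exact Nat.cast_le.2 this
    have hP3 : graphDist (pendantGraph G f) (Sum.inr x) (Sum.inr y) ≤
        graphDist G (f x) (f y) + 2 := by
      have := dist_pendant_le hG f x y
      unfold graphDist
      exact_mod_cast this
    have h1 := hlow x y
    have h2 := hup x y
    generalize graphDist (pendantGraph G f) (Sum.inr x) (Sum.inr y) = p at *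
    generalize graphDist G (f x) (f y) = g at *
    generalize graphDist X x y = d at *
    have hM0 : 0 < M := by linarith
    constructor
    · rw [inv_mul_le_iff₀ hK]
      have h3 : M⁻¹ * d ≤ (1 + A) * p := by nlinarith
      rw [inv_mul_le_iff₀ hM0] at h3
      nlinarith
    · have h4 : A ≤ M * A * d := by
        have : 1 ≤ M * d := by nlinarith
        nlinarith
      nlinarith
  · rintro ⟨V', G, hG, hminor, M, hM, f, hf⟩
    have hM0 : 0 ≤ M := by linarith
    have hadj : ∀ x y, X.Adj x y → G.dist (f x) (f y) ≤ ⌊M⌋₊ := by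
      intro x y hxy
      have := (hf x y).2
      simp only [graphDist, SimpleGraph.dist_eq_one_iff_adj.2 hxy, Nat.cast_one, mul_one] at this
      exact Nat.le_floor this
    let F : V → distNhd G f ⌊M⌋₊ := fun x => ⟨f x, mem_distNhd G f _ x⟩
    have hYconn : (G.induce (distNhd G f ⌊M⌋₊)).Connected := by
      have := hX.nonempty.map F
      refine ⟨fun a b => ?_⟩
      obtain ⟨x, hx⟩ := a.2
      obtain ⟨y, hy⟩ := b.2
      obtain ⟨p, -⟩ := exists_walk_distNhd_of_dist_le hG x a hx
      obtain ⟨q, -⟩ := exists_walk_distNhd_of_dist_le hG y b hy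
      obtain ⟨r⟩ := hX.preconnected x y
      obtain ⟨r', -⟩ := exists_walk_distNhd_of_walk hG hadj r
      exact ⟨(p.append r').append q.reverse⟩
    refine ⟨_, G.induce (distNhd G f ⌊M⌋₊), hYconn,
      fun i h => hminor i (isGraphMinor_of_induce h), M, M, F, hM, hM0, ?_, ?_, ?_⟩
    · intro x y
      have h1 := (hf x y).1
      obtain ⟨p, hp⟩ := hYconn.exists_walk_length_eq_dist (F x) (F y)
      have h2 : G.dist (f x) (f y) ≤ (G.induce (distNhd G f ⌊M⌋₊)).dist (F x) (F y) := by
        rw [← hp, ← SimpleGraph.Walk.length_map (SimpleGraph.Embedding.induce _).toHom p]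
        exact SimpleGraph.dist_le _
      have h3 : graphDist G (f x) (f y) ≤
          graphDist (G.induce (distNhd G f ⌊M⌋₊)) (F x) (F y) := Nat.cast_le.2 h2
      linarith
    · intro x y
      obtain ⟨p, hp⟩ := hX.exists_walk_length_eq_dist x y
      obtain ⟨q, hq⟩ := exists_walk_distNhd_of_walk hG hadj p
      have h1 : graphDist (G.induce (distNhd G f ⌊M⌋₊)) (F x) (F y) ≤
          (⌊M⌋₊ : ℝ) * graphDist X x y := by
        have := (SimpleGraph.dist_le q).trans hq
        rw [hp] at this
        unfold graphDist
        exact_mod_cast this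
      have h2 : (⌊M⌋₊ : ℝ) * graphDist X x y ≤ M * graphDist X x y :=
        mul_le_mul_of_nonneg_right (Nat.floor_le hM0) (Nat.cast_nonneg _)
      linarith
    · intro z
      obtain ⟨x, hx⟩ := z.2
      obtain ⟨p, hp⟩ := exists_walk_distNhd_of_dist_le hG x z hx
      refine ⟨x, le_trans ?_ (Nat.floor_le hM0)⟩
      exact Nat.cast_le.2 ((SimpleGraph.dist_le p).trans hp)
end

section
/- Let H be a finite graph and let X and Y be quasi-isometric length spaces. Then X has H as an asymptotic minor if and only if Y has H as an asymptotic minor; that is, having a fixed finite graph as an asymptotic minor is preserved under quasi-isometries between length spaces. -/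
/-- `S` is an arc from `a` to `b`: the image of an injective path. -/
def IsArcIn {X : Type*} [TopologicalSpace X] (S : Set X) (a b : X) : Prop :=
  ∃ p : Path a b, Function.Injective (fun t => p t) ∧ Set.range (fun t => p t) = S

/-- A metric space `X` has the graph `H` as a `K`-fat minor: there are pairwise disjoint
connected branch sets `B v` and pairwise disjoint branch arcs `P e`, each branch arc meeting
the union of the branch sets exactly at its two endpoints (lying in the branch sets of the
endvertices of the corresponding edge), such that any two of these sets are at distance
at least `K` unless they are equal or an incident branch set/branch arc pair. -/
def HasMetricFatMinor {W : Type*} (H : SimpleGraph W) (X : Type*) [MetricSpace X]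
    (K : ℝ) : Prop :=
  ∃ (B : W → Set X) (P : Sym2 W → Set X),
    (∀ v, IsConnected (B v)) ∧
    (∀ v v', v ≠ v' → Disjoint (B v) (B v')) ∧
    (∀ u w, H.Adj u w → ∃ a ∈ B u, ∃ b ∈ B w,
        IsArcIn (P s(u, w)) a b ∧ P s(u, w) ∩ (⋃ v, B v) = {a, b}) ∧
    (∀ e ∈ H.edgeSet, ∀ e' ∈ H.edgeSet, e ≠ e' → Disjoint (P e) (P e')) ∧
    (∀ v v', v ≠ v' → ∀ x ∈ B v, ∀ y ∈ B v', K ≤ dist x y) ∧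
    (∀ e ∈ H.edgeSet, ∀ e' ∈ H.edgeSet, e ≠ e' → ∀ x ∈ P e, ∀ y ∈ P e', K ≤ dist x y) ∧
    (∀ u w, H.Adj u w → ∀ v, v ≠ u → v ≠ w → ∀ x ∈ P s(u, w), ∀ y ∈ B v, K ≤ dist x y)

/-- `X` has `H` as an asymptotic minor if it has a `K`-fat `H`-minor for every `K > 0`. -/
def HasAsymptoticMinor {W : Type*} (H : SimpleGraph W) (X : Type*) [MetricSpace X] : Prop :=
  ∀ K : ℝ, 0 < K → HasMetricFatMinor H X K

section
open Set Topology Filter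
open scoped unitInterval

/-! ### Paths with convex fibres reparametrize to arcs -/

/-- The largest distance, truncated at `1`, from `F q` to a point `F x` with `q ≤ x ≤ t`; it is `0`
if `t ≤ q`. The supremum is taken over the fixed compact parameter set `[0, 1]` by clamping
`r ∈ [0, 1]` to `max q (min r t)`, which makes continuity in `t` immediate; the description is
accurate for `q, t ∈ [0, 1]`. The truncation keeps the supremum bounded uniformly in `q`. -/
noncomputable def oscGauge {Y : Type*} [MetricSpace Y] (F : ℝ → Y) (q t : ℝ) : ℝ :=
  sSup ((fun r => min (dist (F q) (F (max q (min r t)))) 1) '' Icc (0 : ℝ) 1)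

lemma oscGauge_bdd {Y : Type*} [MetricSpace Y] (F : ℝ → Y) (q t : ℝ) :
    BddAbove ((fun r => min (dist (F q) (F (max q (min r t)))) 1) '' Icc (0 : ℝ) 1) :=
  ⟨1, by rintro _ ⟨r, -, rfl⟩; exact min_le_right _ _⟩

lemma le_oscGauge {Y : Type*} [MetricSpace Y] (F : ℝ → Y) (q t : ℝ) {r : ℝ}
    (hr : r ∈ Icc (0 : ℝ) 1) :
    min (dist (F q) (F (max q (min r t)))) 1 ≤ oscGauge F q t :=
  le_csSup (oscGauge_bdd F q t) ⟨r, hr, rfl⟩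

lemma oscGauge_nonneg {Y : Type*} [MetricSpace Y] (F : ℝ → Y) (q t : ℝ) :
    0 ≤ oscGauge F q t :=
  le_trans (le_min dist_nonneg zero_le_one)
    (le_oscGauge F q t (left_mem_Icc.2 zero_le_one))

lemma oscGauge_le_one {Y : Type*} [MetricSpace Y] (F : ℝ → Y) (q t : ℝ) :
    oscGauge F q t ≤ 1 :=
  csSup_le ((nonempty_Icc.2 zero_le_one).image _)
    (by rintro _ ⟨r, -, rfl⟩; exact min_le_right _ _)

lemma continuous_oscGauge {Y : Type*} [MetricSpace Y] {F : ℝ → Y} (hF : Continuous F) (q : ℝ) :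
    Continuous (oscGauge F q) := by
  refine (isCompact_Icc (a := (0 : ℝ)) (b := 1)).continuous_sSup
    (f := fun t r => min (dist (F q) (F (max q (min r t)))) 1) ?_
  change Continuous fun p : ℝ × ℝ => min (dist (F q) (F (max q (min p.2 p.1)))) 1
  fun_prop

lemma oscGauge_mono {Y : Type*} [MetricSpace Y] (F : ℝ → Y) (q : ℝ) {s t : ℝ}
    (hs : 0 ≤ s) (hst : s ≤ t) : oscGauge F q s ≤ oscGauge F q t := by
  refine csSup_le ((nonempty_Icc.2 zero_le_one).image _) ?_
  rintro _ ⟨r, hr, rfl⟩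
  have h := le_oscGauge F q t (r := min r s) ⟨le_min hr.1 hs, (min_le_left _ _).trans hr.2⟩
  rwa [min_assoc, min_eq_left hst] at h

lemma oscGauge_congr {Y : Type*} [MetricSpace Y] {F : ℝ → Y}
    (hconv : ∀ s r t, s ≤ r → r ≤ t → F s = F t → F r = F s) (q : ℝ) {s t : ℝ}
    (hst : s ≤ t) (h : F s = F t) : oscGauge F q s = oscGauge F q t := by
  have key : ∀ r, F (max q (min r s)) = F (max q (min r t)) := by
    intro r
    rcases le_total r s with hr | hr
    · rw [min_eq_left hr, min_eq_left (hr.trans hst)]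
    rw [min_eq_right hr]
    rcases le_total q (min r t) with hq | hq
    · rw [max_eq_right hq, hconv s (min r t) t (le_min hr hst) (min_le_right _ _) h]
      exact hconv s _ t (le_max_right _ _)
        (max_le (hq.trans (min_le_right _ _)) hst) h
    · rw [max_eq_left hq, max_eq_left ((le_min hr hst).trans hq)]
  unfold oscGauge
  simp only [key]

/-- A continuous map with order-convex fibres has the same fibres on `[0, 1]` as some continuous
monotone real function, namely a weighted sum of the functions `oscGauge F q` over a countable
dense set of `q`. -/
lemma exists_gauge {Y : Type*} [MetricSpace Y] {F : ℝ → Y} (hF : Continuous F)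
    (hconv : ∀ s r t, s ≤ r → r ≤ t → F s = F t → F r = F s) :
    ∃ g : ℝ → ℝ, Continuous g ∧ ∀ s ∈ Icc (0 : ℝ) 1, ∀ t ∈ Icc (0 : ℝ) 1, s ≤ t →
      g s ≤ g t ∧ (g s = g t ↔ F s = F t) := by
  have hsum : Summable fun n : ℕ => ((1 : ℝ) / 2) ^ n := summable_geometric_two
  -- the weights `2⁻ⁿ` make the sum converge uniformly
  set u : ℕ → ℝ → ℝ := fun n t => (1 / 2) ^ n * oscGauge F (TopologicalSpace.denseSeq ℝ n) t
  have hu0 : ∀ n t, 0 ≤ u n t := fun n t => mul_nonneg (by positivity) (oscGauge_nonneg _ _ _)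
  have hu1 : ∀ n t, u n t ≤ (1 / 2) ^ n := fun n t =>
    mul_le_of_le_one_right (by positivity) (oscGauge_le_one _ _ _)
  have hus : ∀ t, Summable fun n => u n t := fun t =>
    Summable.of_nonneg_of_le (fun n => hu0 n t) (fun n => hu1 n t) hsum
  refine ⟨fun t => ∑' n, u n t, ?_, ?_⟩
  · refine continuous_tsum (fun n => (continuous_oscGauge hF _).const_mul _) hsum ?_
    intro n t
    rw [Real.norm_of_nonneg (hu0 n t)]
    exact hu1 n t
  intro s hs t ht hst
  have hle : ∀ n, u n s ≤ u n t := fun n =>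
    mul_le_mul_of_nonneg_left (oscGauge_mono F _ hs.1 hst) (by positivity)
  refine ⟨(hus s).tsum_le_tsum hle (hus t), ?_, ?_⟩
  · intro heq
    by_contra hne
    have hlt : s < t := lt_of_le_of_ne hst (by rintro rfl; exact hne rfl)
    -- a parameter `q` in the dense sequence, so close to `s` that `F q ≠ F t`
    have hev : ∀ᶠ q in 𝓝[>] s, F q ≠ F t :=
      (hF.continuousAt.mono_left nhdsWithin_le_nhds).eventually_ne hne
    obtain ⟨b, hsb, hb⟩ := mem_nhdsGT_iff_exists_Ioo_subset.1 hev
    obtain ⟨n, hn⟩ := (TopologicalSpace.denseRange_denseSeq ℝ).exists_mem_open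
      (isOpen_Ioo (a := s) (b := min b t)) (nonempty_Ioo.2 (lt_min hsb hlt))
    set q := TopologicalSpace.denseSeq ℝ n with hq
    have hqt : F q ≠ F t := hb ⟨hn.1, hn.2.trans_le (min_le_left _ _)⟩
    have h0 : oscGauge F q s = 0 := by
      refine le_antisymm (csSup_le ((nonempty_Icc.2 zero_le_one).image _) ?_)
        (oscGauge_nonneg _ _ _)
      rintro _ ⟨r, -, rfl⟩
      simp [max_eq_left ((min_le_right r s).trans hn.1.le)]
    have h1 : 0 < oscGauge F q t := by
      refine lt_of_lt_of_le ?_ (le_oscGauge F q t ht)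
      rw [min_self, max_eq_right (hn.2.le.trans (min_le_right _ _))]
      exact lt_min (dist_pos.2 hqt) one_pos
    have : u n s < u n t := by
      change (1 / 2) ^ n * oscGauge F q s < (1 / 2) ^ n * oscGauge F q t
      rw [h0]; simpa using h1
    exact absurd heq ((hus s).tsum_lt_tsum hle this (hus t)).ne
  · intro h
    exact tsum_congr fun n => congrArg ((1 / 2 : ℝ) ^ n * ·) (oscGauge_congr hconv _ hst h)

lemma exists_arc_of_convex_fibres {Y : Type*} [MetricSpace Y] {F : ℝ → Y} (hF : Continuous F)
    (hconv : ∀ s r t, s ≤ r → r ≤ t → F s = F t → F r = F s) (h01 : F 0 ≠ F 1) :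
    ∃ p : Path (F 0) (F 1), Function.Injective p ∧ range p ⊆ F '' Icc 0 1 := by
  obtain ⟨g, hg, hgm⟩ := exists_gauge hF hconv
  have m0 : (0 : ℝ) ∈ Icc (0 : ℝ) 1 := by simp
  have m1 : (1 : ℝ) ∈ Icc (0 : ℝ) 1 := by simp
  have hlt : g 0 < g 1 := lt_of_le_of_ne (hgm 0 m0 1 m1 zero_le_one).1
    (mt (hgm 0 m0 1 m1 zero_le_one).2.1 h01)
  have hpos : 0 < g 1 - g 0 := sub_pos.2 hlt
  have hiff : ∀ s t : I, g s = g t ↔ F s = F t := by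
    intro s t
    rcases le_total (s : ℝ) t with h | h
    · exact (hgm s s.2 t t.2 h).2
    · rw [eq_comm, (hgm t t.2 s s.2 h).2, eq_comm]
  -- `G` is the gauge normalized to a monotone surjection of `[0, 1]`
  let G : I → I := fun t => ⟨(g t - g 0) / (g 1 - g 0),
    div_nonneg (sub_nonneg.2 (hgm 0 m0 t t.2 t.2.1).1) hpos.le,
    (div_le_one hpos).2 (sub_le_sub_right (hgm t t.2 1 m1 t.2.2).1 _)⟩
  have hGc : Continuous G := by
    refine Continuous.subtype_mk ?_ _
    fun_prop
  have hGiff : ∀ s t : I, G s = G t ↔ F s = F t := by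
    intro s t
    rw [← hiff, Subtype.ext_iff]
    change (g s - g 0) / (g 1 - g 0) = (g t - g 0) / (g 1 - g 0) ↔ _
    rw [div_left_inj' hpos.ne', sub_left_inj]
  have G0 : G 0 = 0 := by ext; simp [G]
  have G1 : G 1 = 1 := by ext; simp [G, hpos.ne']
  have hGs : Function.Surjective G := by
    intro y
    have := mem_range_of_exists_le_of_exists_ge hGc (c := y) ⟨0, by rw [G0]; exact y.2.1⟩
      ⟨1, by rw [G1]; exact y.2.2⟩
    exact this
  have hq : IsQuotientMap G := IsQuotientMap.of_surjective_continuous hGs hGc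
  let φ : C(I, Y) := ⟨fun t => F t, by fun_prop⟩
  have hfac : Function.FactorsThrough φ G := fun s t h => (hGiff s t).1 h
  let Q : C(I, I) := ⟨G, hGc⟩
  let ψ : C(I, Y) := IsQuotientMap.lift (f := Q) hq φ hfac
  have hψ : ∀ t, ψ (G t) = F t := fun t =>
    DFunLike.congr_fun (IsQuotientMap.lift_comp (f := Q) hq φ hfac) t
  refine ⟨⟨ψ, by simpa [G0] using hψ 0, by simpa [G1] using hψ 1⟩, ?_, ?_⟩
  · intro x y hxy
    obtain ⟨s, rfl⟩ := hGs x
    obtain ⟨t, rfl⟩ := hGs y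
    have : ψ (G s) = ψ (G t) := hxy
    rw [hψ, hψ] at this
    exact (hGiff s t).2 this
  · rintro _ ⟨x, rfl⟩
    obtain ⟨s, rfl⟩ := hGs x
    exact ⟨s, s.2, (hψ s).symm⟩

/-! ### Loop erasure: every path contains an arc -/

/-- A closed subset `C` of `[0, 1]` containing both endpoints such that `γ` takes equal values at
the two ends of each gap of `C`. Skipping the gaps of `C` thus erases loops of `γ`. -/
def IsLoopCut {Y : Type*} (γ : ℝ → Y) (C : Set ℝ) : Prop :=
  IsClosed C ∧ C ⊆ Icc 0 1 ∧ 0 ∈ C ∧ 1 ∈ C ∧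
    ∀ s ∈ C, ∀ t ∈ C, s < t → Ioo s t ∩ C = ∅ → γ s = γ t

/-- Loop cuts are stable under intersections of chains, by compactness: a gap of the intersection is
approximated from inside by gaps of members of the chain. -/
lemma isLoopCut_sInter {Y : Type*} [MetricSpace Y] {γ : ℝ → Y} (hγ : Continuous γ)
    {c : Set (Set ℝ)} (hc : ∀ C ∈ c, IsLoopCut γ C) (hchain : IsChain (· ⊆ ·) c)
    (hne : c.Nonempty) : IsLoopCut γ (⋂₀ c) := by
  obtain ⟨C₀, hC₀⟩ := hne
  refine ⟨isClosed_sInter fun C hC => (hc C hC).1, (sInter_subset_of_mem hC₀).trans (hc _ hC₀).2.1,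
    fun C hC => (hc C hC).2.2.1, fun C hC => (hc C hC).2.2.2.1, ?_⟩
  intro s hs t ht hst hgap
  by_contra hne
  have hd : 0 < dist (γ s) (γ t) / 2 := half_pos (dist_pos.2 hne)
  obtain ⟨δ₁, hδ₁, h₁⟩ := Metric.continuous_iff.1 hγ s _ hd
  obtain ⟨δ₂, hδ₂, h₂⟩ := Metric.continuous_iff.1 hγ t _ hd
  -- within `δ` of `s` and `t` the path stays closer to `γ s`, `γ t` than half their distance
  set δ := min (min δ₁ δ₂) ((t - s) / 2) / 2 with hδ
  have hδ0 : 0 < δ := by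
    have := sub_pos.2 hst
    positivity
  have hb1 : δ < δ₁ := by
    have := min_le_left (min δ₁ δ₂) ((t - s) / 2)
    have := min_le_left δ₁ δ₂
    linarith
  have hb2 : δ < δ₂ := by
    have := min_le_left (min δ₁ δ₂) ((t - s) / 2)
    have := min_le_right δ₁ δ₂
    linarith
  have hb3 : δ < (t - s) / 2 := by
    have := min_le_right (min δ₁ δ₂) ((t - s) / 2)
    linarith
  -- by compactness some member of the chain already misses the middle of the gap
  obtain ⟨C, hC, hCmid⟩ : ∃ C ∈ c, Icc (s + δ) (t - δ) ∩ C = ∅ := by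
    have : Nonempty c := ⟨⟨C₀, hC₀⟩⟩
    have hemp : Icc (s + δ) (t - δ) ∩ ⋂ C : c, (C : Set ℝ) = ∅ := by
      rw [← sInter_eq_iInter, ← subset_empty_iff, ← hgap]
      exact inter_subset_inter_left _ fun x hx => ⟨by linarith [hx.1], by linarith [hx.2]⟩
    obtain ⟨i, hi⟩ := isCompact_Icc.elim_directed_family_closed
      (fun C : c => (C : Set ℝ)) (fun C => (hc C C.2).1) hemp
      fun C C' => (hchain.total C.2 C'.2).elim
        (fun h => ⟨C, subset_rfl, h⟩) (fun h => ⟨C', h, subset_rfl⟩)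
    exact ⟨i, i.2, hi⟩
  obtain ⟨hcl, -, -, -, hCgap⟩ := hc C hC
  -- `(a, b)` is the gap of `C` that contains this middle part
  obtain ⟨a, ⟨haC, ha⟩, hamax⟩ :=
    ((isCompact_Icc (a := s) (b := t - δ)).inter_left hcl).exists_isGreatest
      ⟨s, hs C hC, le_rfl, by linarith⟩
  obtain ⟨b, ⟨hbC, hb⟩, hbmin⟩ :=
    ((isCompact_Icc (a := s + δ) (b := t)).inter_left hcl).exists_isLeast
      ⟨t, ht C hC, by linarith, le_rfl⟩
  have ha' : a < s + δ := by
    by_contra! h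
    exact (hCmid.subset ⟨⟨h, ha.2⟩, haC⟩ : a ∈ (∅ : Set ℝ))
  have hb' : t - δ < b := by
    by_contra! h
    exact (hCmid.subset ⟨⟨hb.1, h⟩, hbC⟩ : b ∈ (∅ : Set ℝ))
  have hab : γ a = γ b := by
    refine hCgap a haC b hbC (by linarith) ?_
    rw [← subset_empty_iff]
    rintro x ⟨⟨hx1, hx2⟩, hxC⟩
    rcases le_or_gt x (t - δ) with h | h
    · exact absurd (hamax ⟨hxC, ha.1.trans hx1.le, h⟩) (not_le.2 hx1)
    · exact absurd (hbmin ⟨hxC, by linarith, hx2.le.trans hb.2⟩) (not_le.2 hx2)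
  have e1 := h₁ a (by rw [Real.dist_eq, abs_of_nonneg (by linarith [ha.1])]; linarith)
  have e2 := h₂ b (by rw [Real.dist_eq, abs_of_nonpos (by linarith [hb.2])]; linarith)
  rw [hab] at e1
  have := dist_triangle_left (γ s) (γ t) (γ b)
  linarith

/-- A minimal loop cut identifies under `γ` only the ends of its gaps: if `γ s = γ t`, then removing
`(s, t)` from it leaves a loop cut. -/
lemma exists_tight_loopCut {Y : Type*} [MetricSpace Y] {γ : ℝ → Y} (hγ : Continuous γ) :
    ∃ C, IsLoopCut γ C ∧ ∀ s ∈ C, ∀ t ∈ C, s < t → γ s = γ t → Ioo s t ∩ C = ∅ := by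
  have hI : IsLoopCut γ (Icc 0 1) := by
    refine ⟨isClosed_Icc, subset_rfl, by simp, by simp, fun s hs t ht hst h => ?_⟩
    have : (s + t) / 2 ∈ (∅ : Set ℝ) := h.subset
      ⟨⟨by linarith, by linarith⟩, by linarith [hs.1, ht.1], by linarith [hs.2, ht.2]⟩
    exact this.elim
  obtain ⟨C, -, hC⟩ := zorn_superset_nonempty {C | IsLoopCut γ C}
    (fun c hc hchain hne => ⟨⋂₀ c, isLoopCut_sInter hγ hc hchain hne,
      fun s hs => sInter_subset_of_mem hs⟩) _ hI
  obtain ⟨hcl, hsub, h0, h1, hgap⟩ := hC.prop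
  refine ⟨C, hC.prop, fun s hs t ht hst hst' => ?_⟩
  have hcut : IsLoopCut γ (C \ Ioo s t) := by
    refine ⟨hcl.sdiff isOpen_Ioo, sdiff_subset.trans hsub, ⟨h0, fun h => ?_⟩, ⟨h1, fun h => ?_⟩, ?_⟩
    · exact absurd (hsub hs).1 (not_le.2 h.1)
    · exact absurd (hsub ht).2 (not_le.2 h.2)
    intro a ha b hb hab hemp
    -- a gap `(a, b)` that is not already a gap of `C` must be `(s, t)` itself
    by_cases hC' : Ioo a b ∩ C = ∅
    · exact hgap a ha.1 b hb.1 hab hC'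
    obtain ⟨x, hx, hxC⟩ := nonempty_iff_ne_empty.2 hC'
    have hxst : x ∈ Ioo s t := by
      by_contra h
      exact (hemp.subset ⟨hx, hxC, h⟩ : x ∈ (∅ : Set ℝ))
    have hsa : s ≤ a := by
      by_contra! h
      exact hemp.subset ⟨⟨h, hxst.1.trans hx.2⟩, hs, fun h' => lt_irrefl _ h'.1⟩
    have hbt : b ≤ t := by
      by_contra! h
      exact hemp.subset ⟨⟨hx.1.trans hxst.2, h⟩, ht, fun h' => lt_irrefl _ h'.2⟩
    have has : a = s := by
      refine le_antisymm ?_ hsa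
      by_contra! h
      exact ha.2 ⟨h, hx.1.trans hxst.2⟩
    have hbt' : b = t := by
      refine le_antisymm hbt ?_
      by_contra! h
      exact hb.2 ⟨hxst.1.trans hx.2, h⟩
    rw [has, hbt', hst']
  have := hC.le_of_le hcut sdiff_subset
  rw [← subset_empty_iff]
  rintro x ⟨hx, hxC⟩
  exact (this hxC).2 hx

/-- A path with distinct endpoints in a metric space contains an arc with the same endpoints. -/
lemma exists_arc {Y : Type*} [MetricSpace Y] {γ : ℝ → Y} (hγ : Continuous γ) (h01 : γ 0 ≠ γ 1) :
    ∃ p : Path (γ 0) (γ 1), Function.Injective p ∧ range p ⊆ γ '' Icc 0 1 := by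
  obtain ⟨C, ⟨hcl, hsub, h0, h1, hgap⟩, htight⟩ := exists_tight_loopCut hγ
  -- `l x` is the last point of `C` up to `x`, with negative `x` treated as `0`
  have hlast : ∀ x : ℝ, ∃ l, IsGreatest (C ∩ Icc 0 (max x 0)) l := fun x =>
    (isCompact_Icc.inter_left hcl).exists_isGreatest ⟨0, h0, le_rfl, le_max_right _ _⟩
  choose l hl using hlast
  have hlC : ∀ x, l x ∈ C := fun x => (hl x).1.1
  have hlmono : Monotone l := fun x y hxy =>
    (hl y).2 ⟨hlC x, (hl x).1.2.1, (hl x).1.2.2.trans (max_le_max_right 0 hxy)⟩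
  have l0 : l 0 = 0 := by
    have := (hl 0).1.2
    rw [max_self] at this
    exact le_antisymm this.2 this.1
  have l1 : l 1 = 1 := by
    refine le_antisymm (hsub (hlC 1)).2 ((hl 1).2 ⟨h1, zero_le_one, le_max_left _ _⟩)
  have hFc : Continuous fun x => γ (l x) := by
    have huc : UniformContinuousOn γ (Icc 0 1) :=
      isCompact_Icc.uniformContinuousOn_of_continuous hγ.continuousOn
    refine UniformContinuous.continuous (Metric.uniformContinuous_iff.2 fun ε hε => ?_)
    obtain ⟨δ, hδ, h⟩ := Metric.uniformContinuousOn_iff.1 huc ε hε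
    refine ⟨δ, hδ, fun {x y} hxy => ?_⟩
    wlog hle : x ≤ y generalizing x y
    · rw [dist_comm]
      exact this (by rwa [dist_comm]) (le_of_not_ge hle)
    have hle' : max x 0 ≤ max y 0 := max_le_max_right 0 hle
    have hxy' : max y 0 - max x 0 < δ := by
      rw [dist_comm, Real.dist_eq, abs_of_nonneg (sub_nonneg.2 hle)] at hxy
      rcases le_total y 0 with hy | hy <;> rcases le_total x 0 with hx | hx <;> simp [*] <;> linarith
    rcases (hlmono hle).eq_or_lt with heq | hlt
    · rw [heq, dist_self]; exact hε
    have hly : max x 0 < l y := by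
      by_contra! h'
      exact absurd ((hl x).2 ⟨hlC y, (hl y).1.2.1, h'⟩) (not_le.2 hlt)
    -- the first point of `C` after `x`; it ends the gap that begins at `l x`
    obtain ⟨d, ⟨hdC, hd⟩, hdmin⟩ :=
      ((isCompact_Icc (a := max x 0) (b := l y)).inter_left hcl).exists_isLeast
        ⟨l y, hlC y, hly.le, le_rfl⟩
    have hxd : γ (l x) = γ d := by
      rcases ((hl x).1.2.2.trans hd.1).eq_or_lt with he | hlt'
      · rw [he]
      refine hgap _ (hlC x) _ hdC hlt' ?_
      rw [← subset_empty_iff]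
      rintro z ⟨hz, hzC⟩
      rcases le_or_gt z (max x 0) with h' | h'
      · exact absurd ((hl x).2 ⟨hzC, (hsub hzC).1, h'⟩) (not_le.2 hz.1)
      · exact absurd (hdmin ⟨hzC, h'.le, hz.2.le.trans hd.2⟩) (not_le.2 hz.2)
    rw [hxd]
    refine h d (hsub hdC) (l y) (hsub (hlC y)) ?_
    rw [dist_comm, Real.dist_eq, abs_of_nonneg (sub_nonneg.2 hd.2)]
    linarith [(hl y).1.2.2, hd.1]
  have hconv : ∀ s r t, s ≤ r → r ≤ t → γ (l s) = γ (l t) → γ (l r) = γ (l s) := by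
    intro s r t hsr hrt h
    rcases (hlmono hsr).eq_or_lt with he | hlt
    · rw [he]
    rcases (hlmono hrt).eq_or_lt with he | hlt'
    · rw [he, h]
    have := htight _ (hlC s) _ (hlC t) (hlt.trans hlt') h
    exact (this.subset ⟨⟨hlt, hlt'⟩, hlC r⟩ : l r ∈ (∅ : Set ℝ)).elim
  obtain ⟨p, hp, hpr⟩ := exists_arc_of_convex_fibres hFc hconv (by simpa [l0, l1] using h01)
  refine ⟨p.cast (by rw [l0]) (by rw [l1]), hp, ?_⟩
  refine hpr.trans ?_
  rintro _ ⟨x, -, rfl⟩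
  exact ⟨l x, hsub (hlC x), rfl⟩

/-! ### Arcs between disjoint closed sets -/

/-- A path from `E` to `F` contains a subpath from `E` to `F` that meets these sets only at its
endpoints: start at the last visit to `E` and stop at the next visit to `F`. -/
lemma exists_trimmed {Y : Type*} [MetricSpace Y] {γ : ℝ → Y} (hγ : Continuous γ) {E F : Set Y}
    (hE : IsClosed E) (hF : IsClosed F) (hEF : Disjoint E F) (h0 : γ 0 ∈ E) (h1 : γ 1 ∈ F) :
    ∃ γ' : ℝ → Y, Continuous γ' ∧ γ' 0 ∈ E ∧ γ' 1 ∈ F ∧ γ' '' Icc 0 1 ⊆ γ '' Icc 0 1 ∧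
      ∀ t ∈ Icc (0 : ℝ) 1, (γ' t ∈ E → t = 0) ∧ (γ' t ∈ F → t = 1) := by
  obtain ⟨a, ⟨haE, ha⟩, hamax⟩ := ((isCompact_Icc (a := (0 : ℝ)) (b := 1)).inter_left
    (hE.preimage hγ)).exists_isGreatest ⟨0, h0, by simp⟩
  obtain ⟨b, ⟨hbF, hb⟩, hbmin⟩ := ((isCompact_Icc (a := a) (b := 1)).inter_left
    (hF.preimage hγ)).exists_isLeast ⟨1, h1, ha.2, le_rfl⟩
  have hab : a < b := lt_of_le_of_ne hb.1 (by
    rintro rfl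
    exact disjoint_left.1 hEF haE hbF)
  have hmem : ∀ t ∈ Icc (0 : ℝ) 1, a + t * (b - a) ∈ Icc a b := fun t ht =>
    ⟨by nlinarith [ht.1], by nlinarith [ht.2]⟩
  refine ⟨fun t => γ (a + t * (b - a)), by fun_prop, by simpa using haE, by simpa using hbF, ?_, ?_⟩
  · rintro _ ⟨t, ht, rfl⟩
    exact ⟨_, ⟨ha.1.trans (hmem t ht).1, (hmem t ht).2.trans hb.2⟩, rfl⟩
  · intro t ht
    constructor
    · intro h
      have := hamax ⟨h, ha.1.trans (hmem t ht).1, (hmem t ht).2.trans hb.2⟩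
      by_contra hne
      have : 0 < t := lt_of_le_of_ne ht.1 (Ne.symm hne)
      nlinarith [mul_pos this (sub_pos.2 hab)]
    · intro h
      have := hbmin ⟨h, (hmem t ht).1, (hmem t ht).2.trans hb.2⟩
      by_contra hne
      have : t < 1 := lt_of_le_of_ne ht.2 hne
      nlinarith [mul_pos (sub_pos.2 this) (sub_pos.2 hab)]

lemma exists_arc_between {Y : Type*} [MetricSpace Y] {N E F : Set Y} (hE : IsClosed E)
    (hF : IsClosed F) (hEF : Disjoint E F) {x y : Y} (hx : x ∈ E) (hy : y ∈ F)
    (hN : JoinedIn N x y) :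
    ∃ S ⊆ N, ∃ a ∈ E, ∃ b ∈ F, IsArcIn S a b ∧ S ∩ (E ∪ F) = {a, b} := by
  obtain ⟨p, hp⟩ := hN
  obtain ⟨γ, hγ, h0, h1, hsub, htrim⟩ := exists_trimmed (γ := p.extend) p.continuous_extend
    hE hF hEF (by simpa using hx) (by simpa using hy)
  have hne : γ 0 ≠ γ 1 := fun h => disjoint_left.1 hEF h0 (h ▸ h1)
  obtain ⟨q, hq, hqr⟩ := exists_arc hγ hne
  refine ⟨range q, ?_, γ 0, h0, γ 1, h1, ⟨q, hq, rfl⟩, ?_⟩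
  · intro z hz
    obtain ⟨t, ht, rfl⟩ := hsub (hqr hz)
    rw [p.extend_apply ht]
    exact hp _
  · apply Subset.antisymm
    · rintro z ⟨hz, hzEF⟩
      obtain ⟨t, ht, rfl⟩ := hqr hz
      rcases hzEF with h | h
      · rw [(htrim t ht).1 h]; exact Or.inl rfl
      · rw [(htrim t ht).2 h]; exact Or.inr rfl
    · rintro z (rfl | rfl)
      · exact ⟨⟨0, q.source⟩, Or.inl h0⟩
      · exact ⟨⟨1, q.target⟩, Or.inr h1⟩

lemma IsArcIn.swap {Y : Type*} [TopologicalSpace Y] {S : Set Y} {a b : Y} (h : IsArcIn S a b) :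
    IsArcIn S b a := by
  obtain ⟨p, hp, hr⟩ := h
  refine ⟨p.symm, fun s t hst => ?_, ?_⟩
  · have : p (unitInterval.symm s) = p (unitInterval.symm t) := hst
    exact unitInterval.symm_bijective.injective (hp this)
  · rw [← hr]
    exact p.symm_range

lemma IsArcIn.isConnected {Y : Type*} [TopologicalSpace Y] {S : Set Y} {a b : Y}
    (h : IsArcIn S a b) : IsConnected S := by
  obtain ⟨p, -, rfl⟩ := h
  exact isConnected_range p.continuous

lemma IsArcIn.left_mem {Y : Type*} [TopologicalSpace Y] {S : Set Y} {a b : Y}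
    (h : IsArcIn S a b) : a ∈ S := by
  obtain ⟨p, -, rfl⟩ := h
  exact ⟨0, p.source⟩

/-! ### Coarse images of connected sets -/

/-- The open `r`-neighbourhood of the image `f '' S`. -/
def coarseImage {X Y : Type*} [MetricSpace Y] (f : X → Y) (r : ℝ) (S : Set X) : Set Y :=
  ⋃ x ∈ S, Metric.ball (f x) r

lemma mem_coarseImage {X Y : Type*} [MetricSpace Y] {f : X → Y} {r : ℝ} {S : Set X} {y : Y} :
    y ∈ coarseImage f r S ↔ ∃ x ∈ S, dist y (f x) < r := by
  simp [coarseImage]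

lemma IsLengthSpace.joinedIn_ball {Y : Type*} [MetricSpace Y] (hY : IsLengthSpace Y) {x y : Y}
    {r : ℝ} (h : dist x y < r) : JoinedIn (Metric.ball x r) x y := by
  obtain ⟨p, hp⟩ := hY x y ((r - dist x y) / 2) (by linarith)
  refine ⟨p, fun t => ?_⟩
  have h1 : edist (p t) (p 0) ≤ ENNReal.ofReal (dist x y + (r - dist x y) / 2) :=
    (eVariationOn.edist_le (fun t => p t) (mem_univ t) (mem_univ 0)).trans hp
  rw [p.source, edist_dist, ENNReal.ofReal_le_ofReal_iff
    (by linarith [dist_nonneg (x := x) (y := y)])] at h1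
  rw [Metric.mem_ball]
  linarith

lemma isPathConnected_coarseImage {X Y : Type*} [MetricSpace X] [MetricSpace Y]
    (hY : IsLengthSpace Y) {f : X → Y} {r : ℝ}
    (hf : ∀ x x', dist x x' < 1 → dist (f x) (f x') < r) {S : Set X} (hS : IsConnected S) :
    IsPathConnected (coarseImage f r S) := by
  have hball : ∀ x ∈ S, ∀ y, dist (f x) y < r → JoinedIn (coarseImage f r S) (f x) y :=
    fun x hx y hy => (hY.joinedIn_ball hy).mono
      (subset_biUnion_of_mem (u := fun x => Metric.ball (f x) r) hx)
  have hr : 0 < r := by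
    obtain ⟨x, -⟩ := hS.nonempty
    simpa using hf x x (by simp)
  -- the centres are joined along `1`-chains in `S`, by connectedness
  have hcent : ∀ x ∈ S, ∀ x' ∈ S, JoinedIn (coarseImage f r S) (f x) (f x') := by
    intro x hx x' hx'
    have := hS.isPreconnected.induction₂
      (fun x x' => x ∈ S → x' ∈ S → JoinedIn (coarseImage f r S) (f x) (f x')) ?_ ?_ ?_ hx hx'
    · exact this hx hx'
    · intro x hx
      filter_upwards [mem_nhdsWithin_of_mem_nhds (Metric.ball_mem_nhds x one_pos)] with z hz _ _
      exact hball x hx _ (hf _ _ (by rwa [dist_comm]))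
    · intro x y z hx hy hz h1 h2 _ _
      exact (h1 hx hy).trans (h2 hy hz)
    · intro x y hx hy h _ _
      exact (h hx hy).symm
  obtain ⟨x₀, hx₀⟩ := hS.nonempty
  refine ⟨f x₀, mem_coarseImage.2 ⟨x₀, hx₀, by simpa using hr⟩, fun {y} hy => ?_⟩
  obtain ⟨x, hx, hxy⟩ := mem_coarseImage.1 hy
  exact (hcent x₀ hx₀ x hx).trans (hball x hx y (by rwa [dist_comm]))

/-- Sets that are far apart in `X` have coarse images in `Y` with closures at distance at least `K`. -/
lemma le_dist_of_mem_closure_coarseImage {X Y : Type*} [MetricSpace X] [MetricSpace Y]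
    {M A : ℝ} (hM : 1 ≤ M) {f : X → Y} (hlow : ∀ x y, M⁻¹ * dist x y - A ≤ dist (f x) (f y))
    {r K : ℝ} {S T : Set X} (hST : ∀ x ∈ S, ∀ y ∈ T, M * (K + A + 2 * r) ≤ dist x y)
    {x y : Y} (hx : x ∈ closure (coarseImage f r S)) (hy : y ∈ closure (coarseImage f r T)) :
    K ≤ dist x y := by
  have h : ∀ x ∈ coarseImage f r S, ∀ y ∈ coarseImage f r T, K ≤ dist x y := by
    intro x hx y hy
    obtain ⟨a, ha, hax⟩ := mem_coarseImage.1 hx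
    obtain ⟨b, hb, hby⟩ := mem_coarseImage.1 hy
    have h1 : K + A + 2 * r ≤ M⁻¹ * dist a b := by
      rw [inv_mul_eq_div, le_div_iff₀ (by linarith)]
      linarith [hST a ha b hb]
    have h2 := hlow a b
    have h3 := dist_triangle4 (f a) x y (f b)
    rw [dist_comm (f a) x] at h3
    linarith
  have hcl : IsClosed {p : Y × Y | K ≤ dist p.1 p.2} :=
    isClosed_le continuous_const continuous_dist
  have : (x, y) ∈ closure (coarseImage f r S ×ˢ coarseImage f r T) := by
    rw [closure_prod_eq]; exact ⟨hx, hy⟩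
  exact closure_minimal (fun p hp => h p.1 hp.1 p.2 hp.2) hcl this

/-! ### Transfer of asymptotic minors -/

/-- Asymptotic minors pass from `X` to a length space `Y` along any map satisfying the two
quasi-isometry inequalities; coarse surjectivity is not required. -/
theorem HasAsymptoticMinor.of_coarse_embedding {X Y : Type*} [MetricSpace X] [MetricSpace Y]
    (hY : IsLengthSpace Y) {M A : ℝ} (hM : 1 ≤ M) (hA : 0 ≤ A) {f : X → Y}
    (hlow : ∀ x y, M⁻¹ * dist x y - A ≤ dist (f x) (f y))
    (hup : ∀ x y, dist (f x) (f y) ≤ M * dist x y + A)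
    {W : Type*} {H : SimpleGraph W} (h : HasAsymptoticMinor H X) : HasAsymptoticMinor H Y := by
  intro K hK
  set r := M + A with hr
  have hr0 : 0 < r := by linarith
  obtain ⟨B, P, hBc, -, hP, -, hBB, hPP, hPB⟩ := h (M * (K + A + 2 * r)) (by positivity)
  have hf : ∀ x x', dist x x' < 1 → dist (f x) (f x') < r := fun x x' hxx' => by
    have := hup x x'
    nlinarith
  -- the closure is taken so that a path has a last point in `B' u` and a first point in `B' w`
  set B' : W → Set Y := fun v => closure (coarseImage f r (B v)) with hB'
  have hB'B' : ∀ v v', v ≠ v' → ∀ x ∈ B' v, ∀ y ∈ B' v', K ≤ dist x y :=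
    fun v v' hv x hx y hy =>
      le_dist_of_mem_closure_coarseImage hM hlow (hBB v v' hv) hx hy
  have hdisj : ∀ {S T : Set Y}, (∀ x ∈ S, ∀ y ∈ T, K ≤ dist x y) → Disjoint S T :=
    fun {S T} h => disjoint_left.2 fun x hx hx' => by
      have := h x hx x hx'
      rw [dist_self] at this
      linarith
  -- the arc is chosen per unordered edge, hence the statement for both orientations
  have harc : ∀ e : Sym2 W, ∃ S ⊆ coarseImage f r (P e), ∀ u w, e = s(u, w) → H.Adj u w →
      ∃ a ∈ B' u, ∃ b ∈ B' w, IsArcIn S a b ∧ S ∩ (⋃ v, B' v) = {a, b} := by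
    intro e
    induction e using Sym2.ind with
    | _ u w =>
    by_cases huw : H.Adj u w
    swap
    · refine ⟨∅, empty_subset _, fun u' w' he hadj => absurd ?_ huw⟩
      rwa [← SimpleGraph.mem_edgeSet, he]
    obtain ⟨a, ha, b, hb, hab, hint⟩ := hP u w huw
    have hfa : ∀ {x : X} {S : Set X}, x ∈ S → f x ∈ coarseImage f r S := fun {x S} hx =>
      mem_coarseImage.2 ⟨x, hx, by simpa using hr0⟩
    obtain ⟨S, hSN, a', ha', b', hb', hab', hint'⟩ := exists_arc_between
      (E := B' u) (F := B' w) isClosed_closure isClosed_closure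
      (hdisj (hB'B' u w huw.ne)) (subset_closure (hfa ha)) (subset_closure (hfa hb))
      ((isPathConnected_coarseImage hY hf hab.isConnected).joinedIn _ (hfa hab.left_mem) _
        (hfa hab.swap.left_mem))
    have hunion : S ∩ (⋃ v, B' v) = {a', b'} := by
      rw [← hint']
      apply Subset.antisymm
      · rintro z ⟨hz, hzB⟩
        refine ⟨hz, ?_⟩
        obtain ⟨v, hv⟩ := mem_iUnion.1 hzB
        by_cases hvu : v = u
        · exact Or.inl (hvu ▸ hv)
        by_cases hvw : v = w
        · exact Or.inr (hvw ▸ hv)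
        have := le_dist_of_mem_closure_coarseImage hM hlow (hPB u w huw v hvu hvw)
          (subset_closure (hSN hz)) hv
        rw [dist_self] at this
        linarith
      · exact inter_subset_inter_right _
          (union_subset (subset_iUnion B' u) (subset_iUnion B' w))
    refine ⟨S, hSN, fun u' w' he _ => ?_⟩
    rcases Sym2.eq_iff.1 he with ⟨rfl, rfl⟩ | ⟨rfl, rfl⟩
    · exact ⟨a', ha', b', hb', hab', hunion⟩
    · exact ⟨b', hb', a', ha', hab'.swap, by rw [hunion, pair_comm]⟩
  choose P' hP'N hP' using harc
  have hP'P' : ∀ e ∈ H.edgeSet, ∀ e' ∈ H.edgeSet, e ≠ e' → ∀ x ∈ P' e, ∀ y ∈ P' e',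
      K ≤ dist x y := fun e he e' he' hne x hx y hy =>
    le_dist_of_mem_closure_coarseImage hM hlow (hPP e he e' he' hne)
      (subset_closure (hP'N e hx)) (subset_closure (hP'N e' hy))
  refine ⟨B', P', fun v => (isPathConnected_coarseImage hY hf (hBc v)).isConnected.closure,
    fun v v' hv => hdisj (hB'B' v v' hv), fun u w huw => hP' _ u w rfl huw,
    fun e he e' he' hne => hdisj (hP'P' e he e' he' hne), hB'B', hP'P', ?_⟩
  exact fun u w huw v hvu hvw x hx y hy =>
    le_dist_of_mem_closure_coarseImage hM hlow (hPB u w huw v hvu hvw)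
      (subset_closure (hP'N _ hx)) hy

/-- Every quasi-isometry has a quasi-inverse. -/
lemma QuasiIsometric.swap {X Y : Type*} [MetricSpace X] [MetricSpace Y]
    (h : QuasiIsometric (fun x y : X => dist x y) (fun x y : Y => dist x y)) :
    QuasiIsometric (fun x y : Y => dist x y) (fun x y : X => dist x y) := by
  obtain ⟨M, A, f, hM, hA, hlow, hup, hsurj⟩ := h
  simp only at hlow hup hsurj
  choose g hg using hsurj
  have hM0 : 0 < M := by linarith
  have hlow' : ∀ x y, dist x y ≤ M * (dist (f x) (f y) + A) := fun x y => by
    have := hlow x y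
    rw [sub_le_iff_le_add, inv_mul_le_iff₀ hM0] at this
    exact this
  refine ⟨M, 3 * A * M, g, hM, by positivity, fun y y' => ?_, fun y y' => ?_, fun x => ?_⟩ <;> beta_reduce
  · have h1 := dist_triangle4 y (f (g y)) (f (g y')) y'
    have h2 := hup (g y) (g y')
    have h3 := hg y
    have h4 := hg y'
    rw [dist_comm] at h4
    have : M⁻¹ * dist y y' ≤ dist (g y) (g y') + 3 * A * M := by
      rw [inv_mul_le_iff₀ hM0]
      have : A ≤ A * (M * M) := le_mul_of_one_le_right hA (by nlinarith)
      nlinarith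
    linarith
  · have h1 := dist_triangle4 (f (g y)) y y' (f (g y'))
    have h2 := hlow' (g y) (g y')
    have h3 := hg y
    have h4 := hg y'
    rw [dist_comm] at h3
    have : M * (dist (f (g y)) (f (g y')) + A) ≤ M * (dist y y' + 3 * A) :=
      mul_le_mul_of_nonneg_left (by linarith) hM0.le
    linarith
  · refine ⟨f x, ?_⟩
    have h2 := hlow' x (g (f x))
    have h3 : M * (dist (f x) (f (g (f x))) + A) ≤ M * (A + A) :=
      mul_le_mul_of_nonneg_left (by simpa using hg (f x)) hM0.le
    have : 0 ≤ A * M := by positivity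
    linarith

end

/-- Having a fixed finite graph `H` as an asymptotic minor is preserved under
quasi-isometries between length spaces. -/
theorem hasAsymptoticMinor_invariant_under_quasiIsometry
    {X Y : Type} [MetricSpace X] [MetricSpace Y]
    (hX : IsLengthSpace X) (hY : IsLengthSpace Y)
    (hQI : QuasiIsometric (fun x y : X => dist x y) (fun x y : Y => dist x y))
    {W : Type} [Finite W] (H : SimpleGraph W) :
    HasAsymptoticMinor H X ↔ HasAsymptoticMinor H Y := by
  constructor
  · obtain ⟨M, A, f, hM, hA, hlow, hup, -⟩ := hQI
    exact HasAsymptoticMinor.of_coarse_embedding hY hM hA hlow hup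
  · obtain ⟨M, A, f, hM, hA, hlow, hup, -⟩ := hQI.swap
    exact HasAsymptoticMinor.of_coarse_embedding hX hM hA hlow hup
end
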